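/- arXiv:2306.05265 — 2 statements merged into one kernel-verified Lean document; each statement's English description precedes it below -/
import Mathlib

section
/- With the MDL hyperparameter calibration, the sum of the segment-wise marginal log-likelihoods equals the MDL criterion up to an explicit Stirling-remainder correction: Σ_{i=1}^{m+1} L_i = MDL(m) + Σ_{i=1}^{m+1} [ Ẽ((n_i + √n_i)/2) − Ẽ(√n_i / 2) ], where Ẽ(x) = ln Γ(x) − ((x − 1/2) ln x − x + (1/2) ln(2π) + R₄(x)). -/
open Real
open scoped BigOperators

/-- `R₄(x) = 1/(12x) − 1/(360x³) + 1/(1260x⁵)`. -/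
noncomputable def R4 (x : ℝ) : ℝ := 1 / (12 * x) - 1 / (360 * x ^ 3) + 1 / (1260 * x ^ 5)

/-- `ΔR_{4,i} = R₄((n_i + √n_i)/2) − R₄(√n_i/2)`. -/
noncomputable def deltaR4 (ni : ℝ) : ℝ := R4 ((ni + Real.sqrt ni) / 2) - R4 (Real.sqrt ni / 2)

/-- The MDL calibration
`f_i = ((max(1,m))^{1/(m+1)} · n_i^{1/4} · T / (1/√n_i + 1)^{1/2})^{2/K} · exp((2/K)ΔR_{4,i})`. -/
noncomputable def mdlF (K m : ℕ) (T ni : ℝ) : ℝ :=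
  ((max 1 m : ℕ) ^ ((1 : ℝ) / ((m : ℝ) + 1)) * ni ^ ((1 : ℝ) / 4) * T /
      (1 / Real.sqrt ni + 1) ^ ((1 : ℝ) / 2)) ^ ((2 : ℝ) / (K : ℝ)) *
    Real.exp ((2 / (K : ℝ)) * deltaR4 ni)

/-- `g_i = f_i n_i − 1`. -/
noncomputable def mdlG (K m : ℕ) (T ni : ℝ) : ℝ := mdlF K m T ni * ni - 1

/-- Segment marginal log-likelihood under the MDL calibration (with `ν_i = √n_i`,
`s̲_i = s_i/√n_i`):
`L_i = −(n_i/2) ln(2π) − (K/2) ln(1 + g_i) + ln Γ((n_i + ν_i)/2) − ln Γ(ν_i/2)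
       + (ν_i/2) ln(s̲_i/2) − ((n_i + ν_i)/2) ln((s̲_i + s_i)/2)`. -/
noncomputable def segLogML (K m : ℕ) (T ni si : ℝ) : ℝ :=
  -(ni / 2) * Real.log (2 * π) - ((K : ℝ) / 2) * Real.log (1 + mdlG K m T ni) +
    Real.log (Real.Gamma ((ni + Real.sqrt ni) / 2)) -
    Real.log (Real.Gamma (Real.sqrt ni / 2)) +
    (Real.sqrt ni / 2) * Real.log (si / Real.sqrt ni / 2) -
    ((ni + Real.sqrt ni) / 2) * Real.log ((si / Real.sqrt ni + si) / 2)

/-- The MDL criterion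
`MDL(m) = Σᵢ (−(n_i/2) ln(2π s_i/n_i) − n_i/2) − ln(max(1,m)) − (m+1) ln T
          − ((K+1)/2) Σᵢ ln n_i`. -/
noncomputable def mdlCrit (K m : ℕ) (T : ℝ) (n : Fin (m + 1) → ℕ) (s : Fin (m + 1) → ℝ) : ℝ :=
  (∑ i, (-((n i : ℝ) / 2) * Real.log (2 * π * s i / (n i : ℝ)) - (n i : ℝ) / 2)) -
    Real.log ((max 1 m : ℕ) : ℝ) - ((m : ℝ) + 1) * Real.log T -
    (((K : ℝ) + 1) / 2) * ∑ i, Real.log ((n i : ℝ))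

/-- `Ẽ(x) = ln Γ(x) − ((x − 1/2) ln x − x + (1/2) ln(2π) + R₄(x))`. -/
noncomputable def stirlingError4 (x : ℝ) : ℝ :=
  Real.log (Real.Gamma x) -
    ((x - 1 / 2) * Real.log x - x + (1 / 2) * Real.log (2 * π) + R4 x)

/-!
Write `a = (n + √n)/2` and `b = √n/2` for a segment of size `n` with residual sum of squares `σ`.
The hyperparameters make the two log arguments of `segLogML` proportional to `a` and `b` with the
same factor, `(σ/√n + σ)/2 = (σ/n) a` and `σ/√n/2 = (σ/n) b`, so the `x log x` terms of Stirling's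
formula for `Γ(a)/Γ(b)` cancel. As `a - b = n/2` and `a/b = √n + 1`, what survives is the Gaussian
profile likelihood, the remainder `ΔR₄`, and `-log (√n + 1)/2`. The calibration `f` is chosen so
that `-(K/2) log (f n)` cancels the last two and contributes the MDL penalty of the segment.
-/

/-- The contribution of one segment to `mdlCrit`; the penalty `log (max 1 m)` on the number of
change points is split evenly over the `m + 1` segments. -/
noncomputable def mdlSegment (K m : ℕ) (T n σ : ℝ) : ℝ :=
  -(n / 2) * log (2 * π * σ / n) - n / 2 - log ((max 1 m : ℕ) : ℝ) / ((m : ℝ) + 1) - log T -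
    ((K : ℝ) + 1) / 2 * log n

/-- The base of the power `2/K` in the calibration `mdlF`. -/
noncomputable def mdlBase (m : ℕ) (T n : ℝ) : ℝ :=
  ((max 1 m : ℕ) : ℝ) ^ ((1 : ℝ) / ((m : ℝ) + 1)) * n ^ ((1 : ℝ) / 4) * T /
    (1 / √n + 1) ^ ((1 : ℝ) / 2)

lemma mdlCrit_eq_sum_mdlSegment (K m : ℕ) (T : ℝ) (n : Fin (m + 1) → ℕ)
    (s : Fin (m + 1) → ℝ) :
    mdlCrit K m T n s = ∑ i, mdlSegment K m T (n i) (s i) := by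
  have hm : (m : ℝ) + 1 ≠ 0 := by positivity
  simp only [mdlCrit, mdlSegment, Finset.sum_sub_distrib, ← Finset.mul_sum, Finset.sum_const,
    Finset.card_univ, Fintype.card_fin, nsmul_eq_mul, Nat.cast_add, Nat.cast_one,
    mul_div_cancel₀ _ hm]

lemma log_Gamma_eq_add_stirlingError4 (x : ℝ) :
    log (Gamma x) =
      (x - 1 / 2) * log x - x + 1 / 2 * log (2 * π) + R4 x + stirlingError4 x := by
  rw [stirlingError4]
  ring

lemma log_Gamma_sub_log_Gamma_add_mul_log {x y c : ℝ} (hx : x ≠ 0) (hy : y ≠ 0) (hc : c ≠ 0) :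
    log (Gamma x) - log (Gamma y) + y * log (c * y) - x * log (c * x) =
      -(x - y) * (log c + 1) - (log x - log y) / 2 + (R4 x - R4 y) +
        (stirlingError4 x - stirlingError4 y) := by
  rw [log_Gamma_eq_add_stirlingError4 x, log_Gamma_eq_add_stirlingError4 y, log_mul hc hx,
    log_mul hc hy]
  ring

lemma log_half_add_sqrt_sub_log_half_sqrt {n : ℝ} (hn : 0 < n) :
    log ((n + √n) / 2) - log (√n / 2) = log (√n + 1) := by
  have hfactor : (n + √n) / 2 = (√n + 1) * (√n / 2) := by
    linear_combination -(1 / 2) * mul_self_sqrt hn.le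
  rw [hfactor, log_mul (by positivity) (by positivity), add_sub_cancel_right]

lemma segLogML_eq_sub_half_mul_log_mdlF (K m : ℕ) (T : ℝ) {n σ : ℝ} (hn : 0 < n) (hσ : σ ≠ 0) :
    segLogML K m T n σ =
      -(n / 2) * log (2 * π * σ / n) - n / 2 +
        (stirlingError4 ((n + √n) / 2) - stirlingError4 (√n / 2)) +
        deltaR4 n - log (√n + 1) / 2 - K / 2 * log (mdlF K m T n * n) := by
  have hprior : σ / √n / 2 = σ / n * (√n / 2) := by
    linear_combination -(σ / 2) * sqrt_div_self' (x := n)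
  have hposterior : (σ / √n + σ) / 2 = σ / n * ((n + √n) / 2) := by
    linear_combination hprior - σ / 2 * div_self hn.ne'
  have hscale : σ / n ≠ 0 := div_ne_zero hσ hn.ne'
  have hprofile : log (2 * π * σ / n) = log (2 * π) + log (σ / n) := by
    rw [mul_div_assoc, log_mul (by positivity) hscale]
  have hGamma := log_Gamma_sub_log_Gamma_add_mul_log (x := (n + √n) / 2) (y := √n / 2)
    (by positivity) (by positivity) hscale
  rw [log_half_add_sqrt_sub_log_half_sqrt hn] at hGamma
  rw [segLogML, mdlG, add_sub_cancel, hprior, hposterior, hprofile, deltaR4]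
  linear_combination hGamma

section Calibration

variable {T n : ℝ}

lemma mdlBase_pos (m : ℕ) (hT : 0 < T) (hn : 0 < n) : 0 < mdlBase m T n := by
  unfold mdlBase
  positivity

lemma log_mdlBase (m : ℕ) (hT : 0 < T) (hn : 0 < n) :
    log (mdlBase m T n) =
      log ((max 1 m : ℕ) : ℝ) / ((m : ℝ) + 1) + log T + log n / 2 - log (√n + 1) / 2 := by
  have hmax : (0 : ℝ) < ((max 1 m : ℕ) : ℝ) := by positivity
  have hratio : log (1 / √n + 1) = log (√n + 1) - log n / 2 := by
    rw [← log_sqrt hn.le, ← log_div (by positivity) (by positivity), add_div,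
      div_self (by positivity), add_comm]
  rw [mdlBase, log_div (by positivity) (by positivity), log_mul (by positivity) hT.ne',
    log_mul (by positivity) (by positivity), log_rpow hmax, log_rpow hn,
    log_rpow (by positivity), hratio]
  ring

lemma half_mul_log_mdlF_mul {K : ℕ} (hK : K ≠ 0) (m : ℕ) (hT : 0 < T) (hn : 0 < n) :
    (K : ℝ) / 2 * log (mdlF K m T n * n) =
      log (mdlBase m T n) + deltaR4 n + K / 2 * log n := by
  have hbase := mdlBase_pos m hT hn
  have hF : mdlF K m T n = mdlBase m T n ^ (2 / (K : ℝ)) * exp (2 / K * deltaR4 n) := rfl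
  rw [hF, log_mul (by positivity) hn.ne', log_mul (by positivity) (by positivity),
    log_rpow hbase, log_exp]
  field_simp

lemma segLogML_eq_mdlSegment_add {K : ℕ} (hK : K ≠ 0) (m : ℕ) {σ : ℝ} (hT : 0 < T) (hn : 0 < n)
    (hσ : σ ≠ 0) :
    segLogML K m T n σ =
      mdlSegment K m T n σ + (stirlingError4 ((n + √n) / 2) - stirlingError4 (√n / 2)) := by
  rw [segLogML_eq_sub_half_mul_log_mdlF K m T hn hσ, half_mul_log_mdlF_mul hK m hT hn,
    log_mdlBase m hT hn, mdlSegment]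
  ring

end Calibration

/-- With the MDL hyperparameter calibration, the sum of the segment-wise marginal
log-likelihoods equals the MDL criterion up to an explicit Stirling-remainder correction:
`Σᵢ L_i = MDL(m) + Σᵢ (Ẽ((n_i + √n_i)/2) − Ẽ(√n_i/2))`. -/
theorem mdl_marginal_likelihood_exact (K m : ℕ) (hK : 1 ≤ K)
    (n : Fin (m + 1) → ℕ) (hn : ∀ i, 1 ≤ n i)
    (s : Fin (m + 1) → ℝ) (hs : ∀ i, 0 < s i)
    (T : ℝ) (hT : T = ∑ i, (n i : ℝ)) :
    (∑ i, segLogML K m T (n i) (s i)) =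
      mdlCrit K m T n s +
        ∑ i, (stirlingError4 (((n i : ℝ) + Real.sqrt (n i)) / 2) -
          stirlingError4 (Real.sqrt (n i) / 2)) := by
  have hn_pos (i) : (0 : ℝ) < n i := mod_cast hn i
  have hT_pos : 0 < T := hT ▸ Finset.sum_pos (fun i _ => hn_pos i) Finset.univ_nonempty
  rw [mdlCrit_eq_sum_mdlSegment, ← Finset.sum_add_distrib]
  exact Finset.sum_congr rfl fun i _ =>
    segLogML_eq_mdlSegment_add (Nat.one_le_iff_ne_zero.mp hK) m hT_pos (hn_pos i) (hs i).ne'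
end

section
/- With the MDL hyperparameter calibration, the sum of the segment-wise marginal log-likelihoods approximates the MDL criterion with explicit error bound: | Σ_{i=1}^{m+1} L_i − MDL(m) | ≤ (m+1) · (16/105) · (min_{1 ≤ i ≤ m+1} n_i)^{−7/2}. -/
/-!
Write `log Γ(x) = (x - 1/2) log x - x + log(2π)/2 + μ(x)` with Binet's function `μ`. The Gamma ratio
of a segment is taken at `a = (n + √n)/2` and `b = √n/2`, and its scale terms are `log (s/n · a)`
and `log (s/n · b)`, so together with the main part of Stirling's formula they give the Gaussian
log-likelihood and `-(log a - log b)/2`. The calibration absorbs the latter and turns the penalty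
into that of the MDL criterion; what survives is `(μ - R₄)(a) - (μ - R₄)(b)`.

It remains to enclose `μ`: `S₇(1/x) ≤ μ(x) ≤ S₅(1/x) = R₄(x)`, where `S₅(u)`, `S₇(u)` truncate
Stirling's series after `u⁵` and `u⁷`, so that `S₅(u) - S₇(u) = u⁷/1680`. Since
`μ(x) - μ(x + 1) = (x + 1/2) log(1 + 1/x) - 1` and `μ → 0`, it suffices to compare this increment
with that of `S(1/x)` and telescope. In the variable `u = 1/x`, after division by `x + 1/2`, the
difference vanishes at `u = 0` and has a rational derivative of visible sign. Both surviving
remainders thus lie in `[-(8/105) n^(-7/2), 0]`.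
-/

open Real
open scoped BigOperators

open Filter Topology

lemma monotoneOn_Ici_of_hasDerivAt_nonneg {f f' : ℝ → ℝ} {a : ℝ}
    (hf : ∀ x, a ≤ x → HasDerivAt f (f' x) x) (hf' : ∀ x, a ≤ x → 0 ≤ f' x) :
    MonotoneOn f (Set.Ici a) :=
  monotoneOn_of_hasDerivWithinAt_nonneg (convex_Ici a)
    (fun x hx => (hf x hx).continuousAt.continuousWithinAt)
    (fun x hx => (hf x (interior_subset hx)).hasDerivWithinAt)
    (fun x hx => hf' x (interior_subset hx))

/-- The main part `(x - 1/2) log x - x + log(2π)/2` of Stirling's formula for `log Γ(x)`. -/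
noncomputable def stirlingMain (x : ℝ) : ℝ := (x - 1 / 2) * log x - x + log (2 * π) / 2

/-- Binet's function `μ`, the error of Stirling's formula for `log Γ`. -/
noncomputable def binet (x : ℝ) : ℝ := log (Gamma x) - stirlingMain x

lemma log_Gamma_eq (x : ℝ) : log (Gamma x) = stirlingMain x + binet x := by
  rw [binet, add_sub_cancel]

lemma log_Gamma_add_one {x : ℝ} (hx : 0 < x) : log (Gamma (x + 1)) = log (Gamma x) + log x := by
  rw [Gamma_add_one hx.ne', log_mul hx.ne' (Gamma_pos_of_pos hx).ne', add_comm]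

lemma binet_sub_binet_add_one {x : ℝ} (hx : 0 < x) :
    binet x - binet (x + 1) = (x + 1 / 2) * log (1 + x⁻¹) - 1 := by
  have hlog : log (1 + x⁻¹) = log (x + 1) - log x := by
    rw [← log_div (by positivity) hx.ne', add_div, div_self hx.ne', one_div]
  rw [binet, binet, log_Gamma_add_one hx, stirlingMain, stirlingMain, hlog]
  ring

lemma tendsto_log_factorial_sub_stirlingMain :
    Tendsto (fun N : ℕ => log (N.factorial : ℝ) - log N - stirlingMain N) atTop (𝓝 0) := by
  have h : Tendsto (fun N : ℕ => log (Stirling.stirlingSeq N) - log √π) atTop (𝓝 0) := by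
    simpa using (Stirling.tendsto_stirlingSeq_sqrt_pi.log (by positivity)).sub_const (log √π)
  refine h.congr' ?_
  filter_upwards [eventually_ne_atTop 0] with N hN
  have hN' : (N : ℝ) ≠ 0 := Nat.cast_ne_zero.2 hN
  rw [Stirling.log_stirlingSeq_formula, stirlingMain, log_sqrt pi_pos.le,
    log_div hN' (exp_ne_zero 1), log_exp, log_mul two_ne_zero hN', log_mul two_ne_zero pi_ne_zero]
  ring

lemma tendsto_stirlingMain_add_sub (c : ℝ) :
    Tendsto (fun x => stirlingMain (x + c) - stirlingMain x - c * log x) atTop (𝓝 0) := by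
  have hlog : Tendsto (fun x => log (1 + c / x)) atTop (𝓝 0) := by
    have h : Tendsto (fun x => 1 + c / x) atTop (𝓝 (1 + 0)) :=
      (tendsto_id.const_div_atTop c).const_add 1
    simpa using h.log (by norm_num)
  have h := ((tendsto_mul_log_one_add_div_atTop c).add (hlog.const_mul (c - 1 / 2))).sub_const c
  simp only [mul_zero, add_zero, sub_self] at h
  refine h.congr' ?_
  filter_upwards [eventually_gt_atTop 0, eventually_gt_atTop (-c)] with x hx hxc
  have hxc' : 0 < x + c := by linarith
  have hdiv : log (1 + c / x) = log (x + c) - log x := by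
    rw [← log_div hxc'.ne' hx.ne', add_div, div_self hx.ne']
  rw [stirlingMain, stirlingMain, hdiv]
  ring

lemma tendsto_log_Gamma_add_natCast_sub {x : ℝ} (hx : 0 < x) :
    Tendsto (fun N : ℕ => log (Gamma (x + (N + 1 : ℕ))) - (x * log N + log (N.factorial : ℝ)))
      atTop (𝓝 0) := by
  have h : Tendsto (fun N : ℕ => log (Gamma x) - BohrMollerup.logGammaSeq x N) atTop (𝓝 0) := by
    simpa using (BohrMollerup.tendsto_log_gamma hx).const_sub (log (Gamma x))
  refine h.congr fun N => ?_
  rw [BohrMollerup.f_add_nat_eq (f := fun y => log (Gamma y)) log_Gamma_add_one hx,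
    BohrMollerup.logGammaSeq]
  ring

lemma tendsto_binet_add_natCast {x : ℝ} (hx : 0 < x) :
    Tendsto (fun N : ℕ => binet (x + N)) atTop (𝓝 0) := by
  rw [← tendsto_add_atTop_iff_nat 1]
  have h := ((tendsto_log_Gamma_add_natCast_sub hx).add tendsto_log_factorial_sub_stirlingMain).sub
    ((tendsto_stirlingMain_add_sub (x + 1)).comp tendsto_natCast_atTop_atTop)
  simp only [add_zero, sub_zero] at h
  refine h.congr fun N => ?_
  have hN : x + ((N + 1 : ℕ) : ℝ) = N + (x + 1) := by push_cast; ring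
  rw [binet, hN, Function.comp_apply]
  ring

/-- For an approximation `S(1/x)` of Binet's function, `logDefect S (1/x)` is the amount by which
its decrease from `x` to `x + 1` exceeds that of `μ`, divided by `x + 1/2` so that the logarithm
stands alone. -/
noncomputable def logDefect (S : ℝ → ℝ) (u : ℝ) : ℝ :=
  2 * u / (u + 2) * (1 + (S u - S (u / (1 + u)))) - log (1 + u)

lemma logDefect_zero (S : ℝ → ℝ) : logDefect S 0 = 0 := by
  simp [logDefect]

lemma mul_logDefect_inv (S : ℝ → ℝ) {x : ℝ} (hx : 0 < x) :
    (x + 1 / 2) * logDefect S x⁻¹ =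
      (S x⁻¹ - binet x) - (S (x + 1)⁻¹ - binet (x + 1)) := by
  have hinc := binet_sub_binet_add_one hx
  have harg : x⁻¹ / (1 + x⁻¹) = (x + 1)⁻¹ := by field_simp
  have hcoeff : (x + 1 / 2) * (2 * x⁻¹ / (x⁻¹ + 2)) = 1 := by field_simp; ring
  rw [logDefect, harg]
  linear_combination (1 + (S x⁻¹ - S (x + 1)⁻¹)) * hcoeff + hinc

lemma hasDerivAt_logDefect {S : ℝ → ℝ} {u a b : ℝ} (hu : 0 ≤ u) (ha : HasDerivAt S a u)
    (hb : HasDerivAt S b (u / (1 + u))) :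
    HasDerivAt (logDefect S)
      (4 / (u + 2) ^ 2 * (1 + (S u - S (u / (1 + u))))
        + 2 * u / (u + 2) * (a - b / (1 + u) ^ 2) - 1 / (1 + u)) u := by
  have hu1 : 1 + u ≠ 0 := by positivity
  have hu2 : u + 2 ≠ 0 := by positivity
  have hid := hasDerivAt_id' u
  have hfactor := (hid.const_mul 2).div (hid.add_const 2) hu2
  have hshift := hb.comp u (hid.div (hid.const_add 1) hu1)
  have hlog := (hid.const_add 1).log hu1
  refine ((hfactor.mul ((ha.sub hshift).const_add 1)).sub hlog).congr_deriv ?_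
  simp only [Function.comp_apply, Pi.div_apply, Pi.sub_apply]
  field_simp
  ring

section Enclosure

variable {S : ℝ → ℝ} {x : ℝ}

lemma tendsto_inv_add_natCast_sub_binet (hS : ContinuousAt S 0) (hS0 : S 0 = 0) (hx : 0 < x) :
    Tendsto (fun N : ℕ => S (x + N)⁻¹ - binet (x + N)) atTop (𝓝 0) := by
  have hinv : Tendsto (fun N : ℕ => (x + N : ℝ)⁻¹) atTop (𝓝 0) :=
    tendsto_inv_atTop_zero.comp (tendsto_atTop_add_const_left _ x tendsto_natCast_atTop_atTop)
  simpa [hS0] using (hS.tendsto.comp hinv).sub (tendsto_binet_add_natCast hx)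

lemma binet_le_of_logDefect_nonneg (hS : ContinuousAt S 0) (hS0 : S 0 = 0)
    (h : ∀ u, 0 ≤ u → 0 ≤ logDefect S u) (hx : 0 < x) : binet x ≤ S x⁻¹ := by
  have hanti : Antitone fun N : ℕ => S (x + N)⁻¹ - binet (x + N) :=
    antitone_nat_of_succ_le fun N => by
      have hxN : 0 < x + N := by positivity
      have hdefect := mul_nonneg (by positivity : 0 ≤ x + N + 1 / 2) (h _ (inv_pos.2 hxN).le)
      rw [mul_logDefect_inv S hxN, sub_nonneg] at hdefect
      rwa [Nat.cast_succ, ← add_assoc]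
  simpa using hanti.le_of_tendsto (tendsto_inv_add_natCast_sub_binet hS hS0 hx) 0

lemma le_binet_of_logDefect_nonpos (hS : ContinuousAt S 0) (hS0 : S 0 = 0)
    (h : ∀ u, 0 ≤ u → logDefect S u ≤ 0) (hx : 0 < x) : S x⁻¹ ≤ binet x := by
  have hmono : Monotone fun N : ℕ => S (x + N)⁻¹ - binet (x + N) :=
    monotone_nat_of_le_succ fun N => by
      have hxN : 0 < x + N := by positivity
      have hdefect := mul_nonpos_of_nonneg_of_nonpos (by positivity : 0 ≤ x + N + 1 / 2)
        (h _ (inv_pos.2 hxN).le)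
      rw [mul_logDefect_inv S hxN, sub_nonpos] at hdefect
      rwa [Nat.cast_succ, ← add_assoc]
  simpa using hmono.ge_of_tendsto (tendsto_inv_add_natCast_sub_binet hS hS0 hx) 0

end Enclosure

/-- Stirling's series for Binet's function at `1/u`, truncated after `u⁵`. -/
noncomputable def stirlingPoly5 (u : ℝ) : ℝ := u / 12 - u ^ 3 / 360 + u ^ 5 / 1260

/-- Stirling's series for Binet's function at `1/u`, truncated after `u⁷`. -/
noncomputable def stirlingPoly7 (u : ℝ) : ℝ := stirlingPoly5 u - u ^ 7 / 1680

lemma stirlingPoly5_inv (x : ℝ) : stirlingPoly5 x⁻¹ = R4 x := by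
  rw [stirlingPoly5, R4]
  ring

lemma hasDerivAt_stirlingPoly5 (u : ℝ) :
    HasDerivAt stirlingPoly5 (1 / 12 - u ^ 2 / 120 + u ^ 4 / 252) u := by
  have hpow (k : ℕ) := hasDerivAt_pow k u
  refine ((((hasDerivAt_id' u).div_const 12).sub ((hpow 3).div_const 360)).add
    ((hpow 5).div_const 1260)).congr_deriv ?_
  ring

lemma hasDerivAt_stirlingPoly7 (u : ℝ) :
    HasDerivAt stirlingPoly7 (1 / 12 - u ^ 2 / 120 + u ^ 4 / 252 - u ^ 6 / 240) u := by
  refine ((hasDerivAt_stirlingPoly5 u).sub ((hasDerivAt_pow 7 u).div_const 1680)).congr_deriv ?_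
  ring

lemma hasDerivAt_logDefect_stirlingPoly5 {u : ℝ} (hu : 0 ≤ u) :
    HasDerivAt (logDefect stirlingPoly5)
      (u ^ 8 * (3 / 20 + 3 / 10 * u + 13 / 60 * u ^ 2 + 1 / 15 * u ^ 3 + 1 / 126 * u ^ 4)
        / ((1 + u) ^ 6 * (u + 2) ^ 2)) u := by
  refine (hasDerivAt_logDefect hu (hasDerivAt_stirlingPoly5 _)
    (hasDerivAt_stirlingPoly5 _)).congr_deriv ?_
  simp only [stirlingPoly5]
  field_simp
  ring

lemma hasDerivAt_logDefect_stirlingPoly7 {u : ℝ} (hu : 0 ≤ u) :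
    HasDerivAt (logDefect stirlingPoly7)
      (-(u ^ 10 * (1 / 3 + u + 407 / 315 * u ^ 2 + 289 / 315 * u ^ 3 + 17 / 45 * u ^ 4
        + 3 / 35 * u ^ 5 + 1 / 120 * u ^ 6) / ((1 + u) ^ 8 * (u + 2) ^ 2))) u := by
  refine (hasDerivAt_logDefect hu (hasDerivAt_stirlingPoly7 _)
    (hasDerivAt_stirlingPoly7 _)).congr_deriv ?_
  simp only [stirlingPoly7, stirlingPoly5]
  field_simp
  ring

lemma logDefect_stirlingPoly5_nonneg {u : ℝ} (hu : 0 ≤ u) : 0 ≤ logDefect stirlingPoly5 u := by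
  rw [← logDefect_zero stirlingPoly5]
  exact monotoneOn_Ici_of_hasDerivAt_nonneg
    (fun _ hv => hasDerivAt_logDefect_stirlingPoly5 hv) (fun _ hv => by positivity)
    Set.self_mem_Ici hu hu

lemma logDefect_stirlingPoly7_nonpos {u : ℝ} (hu : 0 ≤ u) : logDefect stirlingPoly7 u ≤ 0 := by
  rw [← neg_nonneg, ← neg_zero, ← logDefect_zero stirlingPoly7]
  exact monotoneOn_Ici_of_hasDerivAt_nonneg
    (fun _ hv => (hasDerivAt_logDefect_stirlingPoly7 hv).neg)
    (fun _ hv => by rw [neg_neg]; positivity) Set.self_mem_Ici hu hu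

lemma binet_le_R4 {x : ℝ} (hx : 0 < x) : binet x ≤ R4 x := by
  rw [← stirlingPoly5_inv]
  exact binet_le_of_logDefect_nonneg (hasDerivAt_stirlingPoly5 0).continuousAt
    (by norm_num [stirlingPoly5]) (fun _ => logDefect_stirlingPoly5_nonneg) hx

lemma R4_sub_le_binet {x : ℝ} (hx : 0 < x) : R4 x - 1 / (1680 * x ^ 7) ≤ binet x := by
  have h : R4 x - 1 / (1680 * x ^ 7) = stirlingPoly7 x⁻¹ := by
    rw [stirlingPoly7, stirlingPoly5_inv]
    ring
  rw [h]
  exact le_binet_of_logDefect_nonpos (hasDerivAt_stirlingPoly7 0).continuousAt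
    (by norm_num [stirlingPoly7, stirlingPoly5]) (fun _ => logDefect_stirlingPoly7_nonpos) hx

/-- The difference between the marginal log-likelihood of a segment of size `n` and its share of the
MDL criterion. The calibration `mdlF` supplies the term `deltaR4 n`, which approximates the
increment of Binet's function. -/
noncomputable def segError (n : ℝ) : ℝ :=
  binet ((n + √n) / 2) - binet (√n / 2) - deltaR4 n

lemma abs_segError_le {n : ℝ} (hn : 0 < n) : |segError n| ≤ 8 / 105 * n ^ (-(7 : ℝ) / 2) := by
  have ha : 0 < (n + √n) / 2 := by positivity
  have hb : 0 < √n / 2 := by positivity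
  have hpow : n ^ (-(7 : ℝ) / 2) = 1 / √n ^ 7 := by
    rw [sqrt_eq_rpow, ← rpow_natCast, ← rpow_mul hn.le, one_div, ← rpow_neg hn.le]
    norm_num
  have hb7 : 1 / (1680 * (√n / 2) ^ 7) = 8 / 105 * n ^ (-(7 : ℝ) / 2) := by
    rw [hpow]
    field_simp
    norm_num
  have hab : 1 / (1680 * ((n + √n) / 2) ^ 7) ≤ 1 / (1680 * (√n / 2) ^ 7) := by
    gcongr
    linarith
  rw [segError, deltaR4, abs_le]
  constructor <;>
    linarith [binet_le_R4 ha, binet_le_R4 hb, R4_sub_le_binet ha, R4_sub_le_binet hb]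

lemma log_Gamma_ratio_add_log_scale {a b c : ℝ} (ha : 0 < a) (hb : 0 < b) (hc : 0 < c) :
    log (Gamma a) - log (Gamma b) + b * log (c * b) - a * log (c * a) =
      -(a - b) * (1 + log c) - (log a - log b) / 2 + (binet a - binet b) := by
  rw [log_Gamma_eq, log_Gamma_eq, stirlingMain, stirlingMain, log_mul hc.ne' ha.ne',
    log_mul hc.ne' hb.ne']
  ring

section Segment

variable {K : ℕ} (m : ℕ) {T n : ℝ}

lemma half_mul_log_one_add_mdlG (hK : K ≠ 0) (hT : 0 < T) (hn : 0 < n) :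
    (K : ℝ) / 2 * log (1 + mdlG K m T n) =
      log ((max 1 m : ℕ) : ℝ) / ((m : ℝ) + 1) + log n / 4 + log T - log (1 / √n + 1) / 2
        + deltaR4 n + (K : ℝ) / 2 * log n := by
  have hK' : (K : ℝ) ≠ 0 := Nat.cast_ne_zero.2 hK
  have hM : (0 : ℝ) < (max 1 m : ℕ) := Nat.cast_pos.2 (by positivity)
  rw [mdlG, mdlF, add_sub_cancel, log_mul (by positivity) hn.ne',
    log_mul (by positivity) (exp_ne_zero _), log_exp, log_rpow (by positivity),
    log_div (by positivity) (by positivity), log_mul (by positivity) hT.ne',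
    log_mul (by positivity) (by positivity), log_rpow hM, log_rpow hn, log_rpow (by positivity)]
  field_simp

lemma segLogML_eq {s : ℝ} (hK : K ≠ 0) (hT : 0 < T) (hn : 0 < n) (hs : 0 < s) :
    segLogML K m T n s =
      -(n / 2) * log (2 * π * s / n) - n / 2 - log ((max 1 m : ℕ) : ℝ) / ((m : ℝ) + 1) - log T
        - ((K : ℝ) + 1) / 2 * log n + segError n := by
  have hν : 0 < √n := sqrt_pos.2 hn
  have hscale_b : s / √n / 2 = s / n * (√n / 2) := by
    field_simp
    rw [sq_sqrt hn.le]
  have hscale_a : (s / √n + s) / 2 = s / n * ((n + √n) / 2) := by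
    field_simp
    linear_combination -(sq_sqrt hn.le)
  have hlog_ratio : log ((n + √n) / 2) - log (√n / 2) = log n / 2 + log (1 / √n + 1) := by
    rw [← log_sqrt hn.le, ← log_div (by positivity) (by positivity),
      ← log_mul hν.ne' (by positivity)]
    congr 1
    field_simp
    linear_combination -(sq_sqrt hn.le)
  have hlog_var : log (2 * π * s / n) = log (2 * π) + log (s / n) := by
    rw [mul_div_assoc, log_mul (by positivity) (by positivity)]
  have hgamma := log_Gamma_ratio_add_log_scale (a := (n + √n) / 2) (b := √n / 2)
    (by positivity) (by positivity) (div_pos hs hn)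
  rw [segLogML, half_mul_log_one_add_mdlG m hK hT hn, hscale_a, hscale_b, hlog_var, segError]
  linear_combination hgamma - hlog_ratio / 2

end Segment

lemma sum_segLogML_sub_mdlCrit {K m : ℕ} {T : ℝ} {n : Fin (m + 1) → ℕ} {s : Fin (m + 1) → ℝ}
    (hK : K ≠ 0) (hT : 0 < T) (hn : ∀ i, 0 < n i) (hs : ∀ i, 0 < s i) :
    (∑ i, segLogML K m T (n i) (s i)) - mdlCrit K m T n s = ∑ i, segError (n i) := by
  have hm : (m : ℝ) + 1 ≠ 0 := by positivity
  simp only [segLogML_eq m hK hT (Nat.cast_pos.2 (hn _)) (hs _), mdlCrit,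
    Finset.sum_add_distrib, Finset.sum_sub_distrib, Finset.sum_const, Finset.card_univ,
    Fintype.card_fin, nsmul_eq_mul, ← Finset.mul_sum, Nat.cast_add_one]
  field_simp
  ring

/-- With the MDL hyperparameter calibration, the sum of the segment-wise marginal
log-likelihoods approximates the MDL criterion with explicit error bound:
`|Σᵢ L_i − MDL(m)| ≤ (m+1) · (16/105) · (minᵢ n_i)^{−7/2}`. -/
theorem mdl_marginal_likelihood_error_bound (K m : ℕ) (hK : 1 ≤ K)
    (n : Fin (m + 1) → ℕ) (hn : ∀ i, 1 ≤ n i)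
    (s : Fin (m + 1) → ℝ) (hs : ∀ i, 0 < s i)
    (T : ℝ) (hT : T = ∑ i, (n i : ℝ)) :
    |(∑ i, segLogML K m T (n i) (s i)) - mdlCrit K m T n s| ≤
      ((m : ℝ) + 1) * (16 / 105) *
        ((Finset.univ.inf' Finset.univ_nonempty n : ℕ) : ℝ) ^ (-(7 : ℝ) / 2) := by
  have hnpos (i) : (0 : ℝ) < n i := Nat.cast_pos.2 (hn i)
  have hTpos : 0 < T := hT ▸ Finset.sum_pos (fun i _ => hnpos i) Finset.univ_nonempty
  set p : ℕ := Finset.univ.inf' Finset.univ_nonempty n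
  have hp : (0 : ℝ) < p := Nat.cast_pos.2 ((Finset.lt_inf'_iff _).2 fun i _ => hn i)
  have hpn (i) : (p : ℝ) ≤ n i := Nat.cast_le.2 (Finset.inf'_le n (Finset.mem_univ i))
  have herr (i) : |segError (n i)| ≤ 16 / 105 * (p : ℝ) ^ (-(7 : ℝ) / 2) := calc
    |segError (n i)| ≤ 8 / 105 * (n i : ℝ) ^ (-(7 : ℝ) / 2) := abs_segError_le (hnpos i)
    _ ≤ 16 / 105 * (p : ℝ) ^ (-(7 : ℝ) / 2) :=
      mul_le_mul (by norm_num) (rpow_le_rpow_of_nonpos hp (hpn i) (by norm_num))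
        (by positivity) (by norm_num)
  rw [sum_segLogML_sub_mdlCrit (Nat.ne_of_gt hK) hTpos hn hs]
  calc |∑ i, segError (n i)| ≤ ∑ i, |segError (n i)| := Finset.abs_sum_le_sum_abs _ _
    _ ≤ ∑ _i : Fin (m + 1), 16 / 105 * (p : ℝ) ^ (-(7 : ℝ) / 2) :=
      Finset.sum_le_sum fun i _ => herr i
    _ = ((m : ℝ) + 1) * (16 / 105) * (p : ℝ) ^ (-(7 : ℝ) / 2) := by
      simp [mul_assoc]
end
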